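/- For all t, t' > 0, ∫₀^∞ Φ(−y/√t) Φ(−y/√t') dy = ( √t + √t' − √(t + t') ) / ( 2 √(2π) ). -/

import Mathlib

/-!
The integrand has an explicit antiderivative. Write `φ = Φ'`, `s = √t`, `r = √t'`,
`w = √(t + t')`. Since `φ'(x) = -x φ(x)`, the function
`y Φ(-y/s) Φ(-y/r) - s φ(y/s) Φ(-y/r) - r φ(y/r) Φ(-y/s)` has derivative
`Φ(-y/s) Φ(-y/r) + (s/r + r/s) φ(y/s) φ(y/r)`. The product of the two densities is again Gaussian,
`φ(y/s) φ(y/r) = φ(0) φ(w y/(s r))`, so adding `φ(0) w Φ(-w y/(s r))` cancels the second term.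
The resulting antiderivative tends to `0` at infinity, because `Φ(x)` and `x Φ(x)` tend to `0` as
`x → -∞`, and equals `φ(0) (w - s - r)/2` at `0` because `Φ(0) = 1/2`. Nonnegativity of the
integrand makes the fundamental theorem of calculus on `(0, ∞)` applicable.
-/

open MeasureTheory

/-- The standard normal cumulative distribution function. -/
noncomputable def Phi (x : ℝ) : ℝ :=
  (Real.sqrt (2 * Real.pi))⁻¹ * ∫ y in Set.Iic x, Real.exp (-y ^ 2 / 2)

/-- The kernel `Ψ_t(y,x) = 2 − Φ((y−x)/√t) − Φ((y+x)/√t)`. -/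
noncomputable def Psi (t y x : ℝ) : ℝ :=
  2 - Phi ((y - x) / Real.sqrt t) - Phi ((y + x) / Real.sqrt t)

/-- The one-dimensional heat kernel `q_t(z) = (2πt)^{-1/2} e^{-z²/(2t)}`. -/
noncomputable def heatKer (t z : ℝ) : ℝ :=
  (Real.sqrt (2 * Real.pi * t))⁻¹ * Real.exp (-z ^ 2 / (2 * t))

/-- The Neumann heat kernel on the half-line, `q^N_t(y,x) = q_t(y−x) + q_t(y+x)`. -/
noncomputable def neumannKer (t y x : ℝ) : ℝ :=
  heatKer t (y - x) + heatKer t (y + x)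

open Filter Topology

/-- The standard normal density. -/
noncomputable def stdDensity (x : ℝ) : ℝ :=
  (Real.sqrt (2 * Real.pi))⁻¹ * Real.exp (-x ^ 2 / 2)

lemma integrable_exp_neg_sq_div_two : Integrable (fun y : ℝ => Real.exp (-y ^ 2 / 2)) := by
  convert! integrable_exp_neg_mul_sq (b := 1 / 2) (by norm_num) using 3
  ring

lemma integrable_neg_mul_exp_neg_sq_div_two :
    Integrable (fun y : ℝ => -y * Real.exp (-y ^ 2 / 2)) := by
  convert! (integrable_mul_exp_neg_mul_sq (b := 1 / 2) (by norm_num)).neg using 2 with y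
  simp only [Pi.neg_apply, neg_mul]
  ring_nf

lemma Phi_nonneg (x : ℝ) : 0 ≤ Phi x := by
  unfold Phi
  have : 0 ≤ ∫ y in Set.Iic x, Real.exp (-y ^ 2 / 2) :=
    integral_nonneg fun y => (Real.exp_pos _).le
  positivity

lemma hasDerivAt_Phi (x : ℝ) : HasDerivAt Phi (stdDensity x) x := by
  have hc : Continuous (fun y : ℝ => Real.exp (-y ^ 2 / 2)) := by fun_prop
  -- `∫_{-∞}^u = ∫_{-∞}^0 + ∫_0^u`, where the last term is an interval integral.
  have hs : ∀ u : ℝ, (∫ y in Set.Iic u, Real.exp (-y ^ 2 / 2)) =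
      (∫ y in Set.Iic (0 : ℝ), Real.exp (-y ^ 2 / 2)) +
        ∫ y in (0 : ℝ)..u, Real.exp (-y ^ 2 / 2) := by
    intro u
    rw [← intervalIntegral.integral_Iic_sub_Iic integrable_exp_neg_sq_div_two.integrableOn
      integrable_exp_neg_sq_div_two.integrableOn]
    ring
  have h := intervalIntegral.integral_hasDerivAt_right (hc.intervalIntegrable 0 x)
    hc.stronglyMeasurable.stronglyMeasurableAtFilter hc.continuousAt
  have h2 := (h.const_add (∫ y in Set.Iic (0 : ℝ), Real.exp (-y ^ 2 / 2))).const_mul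
    (Real.sqrt (2 * Real.pi))⁻¹
  refine h2.congr_of_eventuallyEq (Eventually.of_forall fun u => ?_)
  simp only [Phi, hs u]

lemma hasDerivAt_stdDensity (x : ℝ) : HasDerivAt stdDensity (-x * stdDensity x) x := by
  have h := ((((hasDerivAt_id x).pow 2).neg.div_const 2).exp).const_mul
    (Real.sqrt (2 * Real.pi))⁻¹
  refine h.congr_deriv ?_
  simp [stdDensity]
  ring

lemma Phi_zero : Phi 0 = 1 / 2 := by
  have h : (∫ y in Set.Iic (0 : ℝ), Real.exp (-y ^ 2 / 2)) = √(2 * Real.pi) / 2 := by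
    have h1 := integral_comp_neg_Iic (0 : ℝ) (fun y : ℝ => Real.exp (-(1 / 2) * y ^ 2))
    rw [neg_zero, integral_gaussian_Ioi] at h1
    rw [show 2 * Real.pi = Real.pi / (1 / 2) by ring, ← h1]
    congr 1
    ext y
    congr 1
    ring
  have hp : √(2 * Real.pi) ≠ 0 := by positivity
  rw [Phi, h]
  field_simp

lemma tendsto_Phi_atBot : Tendsto Phi atBot (𝓝 0) := by
  have h := (tendsto_integral_Iic_zero (f := fun y : ℝ => Real.exp (-y ^ 2 / 2))
    (μ := volume) (tendsto_id (x := (atBot : Filter ℝ)))).const_mul (Real.sqrt (2 * Real.pi))⁻¹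
  rw [mul_zero] at h
  exact h

/-- Markov-type bound: on `(-∞, x]` one has `-x ≤ -y`, so `-x Φ(x)` is dominated by the tail of
the integrable function `-y φ(y)`. -/
lemma tendsto_mul_Phi_atBot : Tendsto (fun x => -x * Phi x) atBot (𝓝 0) := by
  have h := (tendsto_integral_Iic_zero (f := fun y : ℝ => -y * Real.exp (-y ^ 2 / 2))
    (μ := volume) (tendsto_id (x := (atBot : Filter ℝ)))).const_mul (Real.sqrt (2 * Real.pi))⁻¹
  rw [mul_zero] at h
  refine squeeze_zero' ?_ ?_ h
  · filter_upwards [eventually_le_atBot (0 : ℝ)] with x hx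
    exact mul_nonneg (by linarith) (Phi_nonneg x)
  · refine Eventually.of_forall fun x => ?_
    have h1 : -x * ∫ y in Set.Iic x, Real.exp (-y ^ 2 / 2) ≤
        ∫ y in Set.Iic x, -y * Real.exp (-y ^ 2 / 2) := by
      rw [← integral_const_mul]
      refine setIntegral_mono_on (integrable_exp_neg_sq_div_two.const_mul _).integrableOn
        integrable_neg_mul_exp_neg_sq_div_two.integrableOn measurableSet_Iic fun y hy => ?_
      have hy' : y ≤ x := hy
      gcongr
    have h2 : 0 ≤ (Real.sqrt (2 * Real.pi))⁻¹ := by positivity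
    have h3 := mul_le_mul_of_nonneg_left h1 h2
    simp only [Phi, id]
    linarith

lemma tendsto_stdDensity_atBot : Tendsto stdDensity atBot (𝓝 0) := by
  have h1 : Tendsto (fun x : ℝ => x ^ 2) atBot atTop := by
    simpa [Function.comp_def] using
      (tendsto_pow_atTop (α := ℝ) (two_ne_zero)).comp tendsto_abs_atBot_atTop
  have h := (Real.tendsto_exp_atBot.comp
    (tendsto_neg_atTop_atBot.comp (h1.atTop_div_const (two_pos)))).const_mul
      (Real.sqrt (2 * Real.pi))⁻¹
  rw [mul_zero] at h
  refine h.congr fun x => ?_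
  simp [stdDensity, neg_div]

lemma stdDensity_mul {s r w : ℝ} (hs : 0 < s) (hr : 0 < r) (hw : w ^ 2 = s ^ 2 + r ^ 2) (y : ℝ) :
    stdDensity (-y / s) * stdDensity (-y / r) =
      (√(2 * Real.pi))⁻¹ * stdDensity (-y * (w / (s * r))) := by
  have : Real.exp (-(-y / s) ^ 2 / 2) * Real.exp (-(-y / r) ^ 2 / 2) =
      Real.exp (-(-y * (w / (s * r))) ^ 2 / 2) := by
    rw [← Real.exp_add]
    congr 1
    rw [mul_pow, div_pow w, hw]
    field_simp
    ring
  simp only [stdDensity, ← this]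
  ring

/-- The antiderivative `y Φ(-y/s) Φ(-y/r) - s φ(y/s) Φ(-y/r) - r φ(y/r) Φ(-y/s)
+ φ(0) w Φ(-w y/(s r))` of `Φ(-y/s) Φ(-y/r)`, where `w² = s² + r²`; the even density `φ` is
evaluated at the negated arguments. -/
noncomputable def antideriv (s r w y : ℝ) : ℝ :=
  y * (Phi (-y / s) * Phi (-y / r)) - s * (stdDensity (-y / s) * Phi (-y / r))
    - r * (stdDensity (-y / r) * Phi (-y / s))
    + (√(2 * Real.pi))⁻¹ * w * Phi (-y * (w / (s * r)))

lemma hasDerivAt_antideriv {s r w : ℝ} (hs : 0 < s) (hr : 0 < r) (hw : w ^ 2 = s ^ 2 + r ^ 2)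
    (y : ℝ) : HasDerivAt (antideriv s r w) (Phi (-y / s) * Phi (-y / r)) y := by
  have hn : HasDerivAt (fun y : ℝ => -y) (-1) y := hasDerivAt_neg y
  have ls := hn.div_const s
  have lr := hn.div_const r
  have lw := hn.mul_const (w / (s * r))
  have Ps := (hasDerivAt_Phi (-y / s)).comp y ls
  have Pr := (hasDerivAt_Phi (-y / r)).comp y lr
  have Pw := (hasDerivAt_Phi (-y * (w / (s * r)))).comp y lw
  have Ds := (hasDerivAt_stdDensity (-y / s)).comp y ls
  have Dr := (hasDerivAt_stdDensity (-y / r)).comp y lr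
  have h := ((((hasDerivAt_id y).mul (Ps.mul Pr)).sub ((Ds.mul Pr).const_mul s)).sub
    ((Dr.mul Ps).const_mul r)).add (Pw.const_mul ((√(2 * Real.pi))⁻¹ * w))
  refine h.congr_deriv ?_
  have key := stdDensity_mul hs hr hw y
  simp only [Function.comp, id, Pi.mul_apply]
  generalize stdDensity (-y * (w / (s * r))) = D at *
  generalize stdDensity (-y / s) = a at *
  generalize stdDensity (-y / r) = b at *
  generalize Phi (-y / s) = A at *
  generalize Phi (-y / r) = B at *
  generalize (√(2 * Real.pi))⁻¹ = c at *
  have e : c * w * (D * (-1 * (w / (s * r)))) = -((s ^ 2 + r ^ 2) / (s * r)) * (a * b) := by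
    rw [key, ← hw]
    ring
  rw [e]
  field_simp
  ring

lemma tendsto_antideriv {s r w : ℝ} (hs : 0 < s) (hr : 0 < r) (hw : 0 < w) :
    Tendsto (antideriv s r w) atTop (𝓝 0) := by
  have ls : Tendsto (fun y : ℝ => -y / s) atTop atBot :=
    tendsto_neg_atTop_atBot.atBot_div_const hs
  have lr : Tendsto (fun y : ℝ => -y / r) atTop atBot :=
    tendsto_neg_atTop_atBot.atBot_div_const hr
  have lw : Tendsto (fun y : ℝ => -y * (w / (s * r))) atTop atBot :=
    tendsto_neg_atTop_atBot.atBot_mul_const (by positivity)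
  have h := (((((tendsto_mul_Phi_atBot.comp ls).mul (tendsto_Phi_atBot.comp lr)).const_mul s).sub
    (((tendsto_stdDensity_atBot.comp ls).mul (tendsto_Phi_atBot.comp lr)).const_mul s)).sub
    (((tendsto_stdDensity_atBot.comp lr).mul (tendsto_Phi_atBot.comp ls)).const_mul r)).add
    ((tendsto_Phi_atBot.comp lw).const_mul ((√(2 * Real.pi))⁻¹ * w))
  simp only [mul_zero, sub_zero, add_zero] at h
  refine h.congr fun y => ?_
  simp only [antideriv, Function.comp]
  field_simp

/-- Gaussian integral identity:
`∫₀^∞ Φ(−y/√t) Φ(−y/√t') dy = (√t + √t' − √(t+t')) / (2√(2π))`. -/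
theorem integral_Phi_mul_Phi (t t' : ℝ) (ht : 0 < t) (ht' : 0 < t') :
    (∫ y in Set.Ioi (0 : ℝ), Phi (-y / Real.sqrt t) * Phi (-y / Real.sqrt t')) =
      (Real.sqrt t + Real.sqrt t' - Real.sqrt (t + t')) / (2 * Real.sqrt (2 * Real.pi)) := by
  have hs : 0 < √t := Real.sqrt_pos.2 ht
  have hr : 0 < √t' := Real.sqrt_pos.2 ht'
  have hw : 0 < √(t + t') := Real.sqrt_pos.2 (by linarith)
  have hw2 : √(t + t') ^ 2 = √t ^ 2 + √t' ^ 2 := by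
    rw [Real.sq_sqrt ht.le, Real.sq_sqrt ht'.le, Real.sq_sqrt (by linarith)]
  rw [integral_Ioi_of_hasDerivAt_of_nonneg' (fun y _ => hasDerivAt_antideriv hs hr hw2 y)
    (fun y _ => mul_nonneg (Phi_nonneg _) (Phi_nonneg _)) (tendsto_antideriv hs hr hw)]
  have hp : √(2 * Real.pi) ≠ 0 := by positivity
  simp only [antideriv, neg_zero, zero_div, zero_mul, Phi_zero, stdDensity]
  norm_num
  field_simp
  ring
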